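/- Let μ be a probability measure on ℝ and for each N let μ^{(N)} be a probability measure on S^{N-1}(√N) such that the sequence {μ^{(N)}} is μ-chaotic. Then H(μ|γ) ≤ liminf_{N→∞} H(μ^{(N)} | σ^N)/N, where γ also denotes the standard Gaussian probability measure γ(v)dv on ℝ. -/

import Mathlib

/-!
The proof is by duality. The entropy `H(μ|γ)` is the supremum of `∫ φ dμ - ∫ e^φ dγ + 1` over
compactly supported continuous `φ` (`klDiv_le_of_variational`), so it is enough to bound
`∫ φ dμ - log ∫ e^φ dγ` for one such `φ` and use `log t ≤ t - 1`. The Donsker–Varadhan inequality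
on the sphere with the test function `∑ φ(v_i)` and exchangeability give
`N ∫ φ d(P_1 μN) ≤ H(μN|σN) + log ∫ e^{∑ φ(v_i)} dσN` (`marginal_one_le`), and the left side
divided by `N` tends to `∫ φ dμ` because the first marginals converge weakly.

What remains is `limsup (1/N) log ∫ e^{∑ φ(v_i)} dσN ≤ log ∫ e^φ dγ`
(`eventually_integral_exp_sum_sigmaN_le`). A Gaussian vector has independent direction and norm
(`gaussian_angular_radial_indep`), so the sphere integral equals the Gaussian integral of
`e^{∑ φ}` at the projected point, conditioned on the event that the norm is close to `√N`. That
event has probability at least `1/2` for large `N` (`gaussian_shell`), and on it the projection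
is a dilation by a factor close to `1`, which changes each `φ(x_i)` by at most `δ`
(`exists_dilation_modulus`). Dropping the conditioning leaves `2 e^{Nδ} (∫ e^φ dγ)^N`.
-/

open MeasureTheory ProbabilityTheory Filter Set Classical
open scoped ENNReal NNReal Topology BigOperators

noncomputable section

/-- The uniform (rotation-invariant) probability measure on the sphere of radius `r`
in `ℝ^N`, realized as the pushforward of the standard Gaussian under radial projection. -/
def uniformSphere (N : ℕ) (r : ℝ) : Measure (Fin N → ℝ) :=
  Measure.map (fun x => (r / Real.sqrt (∑ i, x i ^ 2)) • x)
    (Measure.pi fun _ : Fin N => gaussianReal 0 1)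

/-- `σ^N`, the uniform probability measure on `S^{N-1}(√N)`. -/
def sigmaN (N : ℕ) : Measure (Fin N → ℝ) := uniformSphere N (Real.sqrt N)

/-- `Z_N(f,r) = ∫_{S^{N-1}(r)} f^{⊗N} dσ^N_r`. -/
def ZN (N : ℕ) (f : ℝ → ℝ) (r : ℝ) : ℝ :=
  ∫ v, (∏ i, f (v i)) ∂(uniformSphere N r)

/-- Relative entropy `H(μ|ν)`, valued in `ℝ≥0∞`. -/
def relEntropy {α : Type*} [MeasurableSpace α] (μ ν : Measure α) : ℝ≥0∞ :=
  if μ ≪ ν ∧ Integrable (fun x => Real.log (μ.rnDeriv ν x).toReal) μ then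
    ENNReal.ofReal (∫ x, Real.log (μ.rnDeriv ν x).toReal ∂μ)
  else ⊤

/-- The measure `f(v) dv` on `ℝ`. -/
def densityMeasure (f : ℝ → ℝ) : Measure ℝ :=
  volume.withDensity fun v => ENNReal.ofReal (f v)

/-- The conditioned product measure `[μ^{⊗N}]_{S^{N-1}(√N)}`. -/
def condProd (f : ℝ → ℝ) (N : ℕ) : Measure (Fin N → ℝ) :=
  (sigmaN N).withDensity fun v =>
    ENNReal.ofReal ((∏ i, f (v i)) / ZN N f (Real.sqrt N))

/-- Projection to the first `k` coordinates (junk value `0` if `N < k`). -/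
def projFun (N k : ℕ) (v : Fin N → ℝ) : Fin k → ℝ :=
  fun i => if h : (i : ℕ) < N then v ⟨i, h⟩ else 0

/-- `P_k μ`, the marginal on the first `k` coordinates. -/
def marginal (N k : ℕ) (μ : Measure (Fin N → ℝ)) : Measure (Fin k → ℝ) :=
  Measure.map (projFun N k) μ

/-- The rotation `R_{i,j,θ}` in the `(v_i,v_j)`-plane. -/
def kacRot (N : ℕ) (i j : Fin N) (θ : ℝ) (v : Fin N → ℝ) : Fin N → ℝ :=
  Function.update (Function.update v i (Real.cos θ * v i - Real.sin θ * v j)) j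
    (Real.sin θ * v i + Real.cos θ * v j)

/-- The Kac transition operator `Q_N`. -/
def kacQ (N : ℕ) (φ : (Fin N → ℝ) → ℝ) (v : Fin N → ℝ) : ℝ :=
  ((N : ℝ) * ((N : ℝ) - 1) / 2)⁻¹ *
    ∑ p ∈ Finset.univ.filter (fun p : Fin N × Fin N => p.1 < p.2),
      (1 / (2 * Real.pi)) * ∫ θ in (0:ℝ)..(2 * Real.pi), φ (kacRot N p.1 p.2 θ v)

/-- The Kac generator `L_N = N (Q_N - I)`. -/
def kacL (N : ℕ) (φ : (Fin N → ℝ) → ℝ) (v : Fin N → ℝ) : ℝ :=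
  (N : ℝ) * (kacQ N φ v - φ v)

/-- The standard Gaussian density `γ` on `ℝ`. -/
def gaussDens (v : ℝ) : ℝ := Real.exp (-(v ^ 2) / 2) / Real.sqrt (2 * Real.pi)

/-- The Maxwellian density `M_a` of variance `a`. -/
def maxwellian (a : ℝ) (v : ℝ) : ℝ :=
  Real.exp (-(v ^ 2) / (2 * a)) / Real.sqrt (2 * Real.pi * a)

/-- The Wild convolution `f ∘ g`. -/
def wild (f g : ℝ → ℝ) (v : ℝ) : ℝ :=
  (1 / (2 * Real.pi)) *
    ∫ vs : ℝ, ∫ θ in (0:ℝ)..(2 * Real.pi),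
      f (v * Real.cos θ - vs * Real.sin θ) * g (v * Real.sin θ + vs * Real.cos θ)

/-- `α_N(u) = u^{N/2-1} e^{-u/2}`. -/
def alphaN (N : ℕ) (u : ℝ) : ℝ := u ^ ((N : ℝ) / 2 - 1) * Real.exp (-u / 2)

/-- `γ^{(N)}(r) = e^{-r²/2}/(2π)^{N/2}`. -/
def gammaDensN (N : ℕ) (r : ℝ) : ℝ :=
  Real.exp (-(r ^ 2) / 2) / (2 * Real.pi) ^ ((N : ℝ) / 2)

/-- `Z'_N(f,r) = ∫_{S^{N-1}(r)} (f/γ)^{⊗N} dσ^N_r`. -/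
def ZN' (N : ℕ) (f : ℝ → ℝ) (r : ℝ) : ℝ :=
  ∫ v, (∏ i, f (v i) / gaussDens (v i)) ∂(uniformSphere N r)



/-! ### The variational formula for relative entropy -/

theorem relEntropy_eq_klDiv {α : Type*} [MeasurableSpace α] (μ ν : Measure α)
    [IsProbabilityMeasure μ] [IsProbabilityMeasure ν] :
    relEntropy μ ν = InformationTheory.klDiv μ ν := by
  rw [relEntropy, InformationTheory.klDiv]
  simp [llr_def]

/-- The easy half of the Donsker–Varadhan formula, for bounded `g`: it is Gibbs' inequality for
`μ` relative to the tilted measure `e^g ν / ∫ e^g dν`. -/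
theorem integral_le_klDiv_add_log {α : Type*} [MeasurableSpace α] (μ ν : Measure α)
    [IsProbabilityMeasure μ] [IsProbabilityMeasure ν]
    (hfin : InformationTheory.klDiv μ ν ≠ ∞) {g : α → ℝ}
    (hgm : Measurable g) {M : ℝ} (hg : ∀ x, |g x| ≤ M) :
    ∫ x, g x ∂μ ≤ (InformationTheory.klDiv μ ν).toReal + Real.log (∫ x, Real.exp (g x) ∂ν) := by
  obtain ⟨hac, hint⟩ := InformationTheory.klDiv_ne_top_iff.1 hfin
  have hgμ : Integrable g μ :=
    Integrable.of_bound hgm.aestronglyMeasurable M (ae_of_all _ hg)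
  have hgν : Integrable (fun x => Real.exp (g x)) ν := by
    refine Integrable.of_bound (by fun_prop) (Real.exp M) (ae_of_all _ fun x => ?_)
    rw [Real.norm_eq_abs, Real.abs_exp]
    exact Real.exp_le_exp.2 ((le_abs_self _).trans (hg x))
  have hprob := isProbabilityMeasure_tilted hgν
  have hac' : μ ≪ ν.tilted g := hac.trans (absolutelyContinuous_tilted hgν)
  have h1 := integral_llr_tilted_right hac hgμ hgν hint
  have h2 := InformationTheory.toReal_klDiv_of_measure_eq hac' (by simp)
  have h3 := InformationTheory.toReal_klDiv_of_measure_eq hac (by simp)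
  have h4 : 0 ≤ (InformationTheory.klDiv μ (ν.tilted g)).toReal := ENNReal.toReal_nonneg
  linarith

/-- A variational bound against compactly supported continuous test functions extends to bounded
measurable ones, by `L¹(μ + ν)`-density and clipping of the approximants. -/
theorem variational_bounded_measurable (μ ν : Measure ℝ)
    [IsProbabilityMeasure μ] [IsProbabilityMeasure ν] {C : ℝ}
    (h : ∀ φ : ℝ → ℝ, Continuous φ → HasCompactSupport φ →
      ∫ x, φ x ∂μ - ∫ x, Real.exp (φ x) ∂ν + 1 ≤ C)
    {φ : ℝ → ℝ} (hφ : Measurable φ) {M : ℝ} (hM : ∀ x, |φ x| ≤ M) :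
    ∫ x, φ x ∂μ - ∫ x, Real.exp (φ x) ∂ν + 1 ≤ C := by
  have hM0 : 0 ≤ M := (abs_nonneg _).trans (hM 0)
  have hbdd : ∀ (m : Measure ℝ) [IsFiniteMeasure m] (f : ℝ → ℝ), Measurable f →
      (∀ x, |f x| ≤ M) → Integrable f m := fun m _ f hf hb =>
    Integrable.of_bound hf.aestronglyMeasurable M (ae_of_all _ hb)
  have hexp : ∀ f : ℝ → ℝ, Measurable f → (∀ x, |f x| ≤ M) →
      Integrable (fun x => Real.exp (f x)) ν := fun f hf hb => by
    refine Integrable.of_bound (by fun_prop) (Real.exp M) (ae_of_all _ fun x => ?_)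
    rw [Real.norm_eq_abs, Real.abs_exp]
    exact Real.exp_le_exp.2 ((le_abs_self _).trans (hb x))
  have key : ∀ ε > 0, ∫ x, φ x ∂μ - ∫ x, Real.exp (φ x) ∂ν + 1 ≤ C + ε * (1 + Real.exp M) := by
    intro ε hε
    obtain ⟨ψ, hψs, hψε, hψc, hψi⟩ :=
      (hbdd (μ + ν) φ hφ hM).exists_hasCompactSupport_integral_sub_le hε
    set ψ' : ℝ → ℝ := fun x => max (-M) (min M (ψ x)) with hψ'
    have hψ'c : Continuous ψ' := by fun_prop
    have hψ's : HasCompactSupport ψ' :=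
      hψs.comp_left (g := fun y => max (-M) (min M y)) (by simp [hM0])
    have hψ'M : ∀ x, |ψ' x| ≤ M := fun x =>
      abs_le.2 ⟨le_max_left _ _, max_le (by linarith) (min_le_left _ _)⟩
    have hclip : ∀ x, |φ x - ψ' x| ≤ |φ x - ψ x| := fun x => by
      have := abs_le.1 (hM x)
      simp only [hψ']
      rcases le_total M (ψ x) with h1 | h1
      · rw [min_eq_left h1, max_eq_right (by linarith), abs_sub_comm, abs_of_nonneg (by linarith),
          abs_sub_comm, abs_of_nonneg (by linarith)]
        linarith
      · rw [min_eq_right h1]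
        rcases le_total (-M) (ψ x) with h2 | h2
        · rw [max_eq_right h2]
        · rw [max_eq_left h2, abs_of_nonneg (by linarith), abs_of_nonneg (by linarith)]
          linarith
    have hsum : ∫ x, |φ x - ψ' x| ∂μ + ∫ x, |φ x - ψ' x| ∂ν ≤ ε := by
      have hd : ∀ (m : Measure ℝ) [IsFiniteMeasure m], Integrable (fun x => |φ x - ψ' x|) m :=
        fun m _ => ((hbdd m φ hφ hM).sub (hbdd m ψ' hψ'c.measurable hψ'M)).abs
      rw [← integral_add_measure (hd μ) (hd ν)]
      refine le_trans (integral_mono (hd _) ?_ hclip) hψε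
      exact ((hbdd (μ + ν) φ hφ hM).sub hψi).abs
    have hμ0 : 0 ≤ ∫ x, |φ x - ψ' x| ∂μ := integral_nonneg fun _ => abs_nonneg _
    have hν0 : 0 ≤ ∫ x, |φ x - ψ' x| ∂ν := integral_nonneg fun _ => abs_nonneg _
    have e1 : ∫ x, φ x ∂μ ≤ ∫ x, ψ' x ∂μ + ∫ x, |φ x - ψ' x| ∂μ := by
      have i1 := hbdd μ φ hφ hM
      have i2 := hbdd μ ψ' hψ'c.measurable hψ'M
      have i3 : Integrable (fun x => |φ x - ψ' x|) μ := (i1.sub i2).abs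
      rw [← integral_add i2 i3]
      refine integral_mono i1 (i2.add i3) fun x => ?_
      have := le_abs_self (φ x - ψ' x)
      simp only
      linarith
    have e2 : ∫ x, Real.exp (ψ' x) ∂ν ≤
        ∫ x, Real.exp (φ x) ∂ν + Real.exp M * ∫ x, |φ x - ψ' x| ∂ν := by
      have i1 := hexp φ hφ hM
      have i2 := hexp ψ' hψ'c.measurable hψ'M
      have i3 : Integrable (fun x => Real.exp M * |φ x - ψ' x|) ν :=
        ((hbdd ν φ hφ hM).sub (hbdd ν ψ' hψ'c.measurable hψ'M)).abs.const_mul _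
      rw [← integral_const_mul, ← integral_add i1 i3]
      refine integral_mono i2 (i1.add i3) fun x => ?_
      -- tangent-line inequality at the clipped value, where the slope is at most `exp M`
      have t1 : 1 + (φ x - ψ' x) ≤ Real.exp (φ x - ψ' x) := by
        linarith [Real.add_one_le_exp (φ x - ψ' x)]
      have t2 : Real.exp (φ x) = Real.exp (ψ' x) * Real.exp (φ x - ψ' x) := by
        rw [← Real.exp_add]; ring_nf
      have t3 : Real.exp (ψ' x) ≤ Real.exp M :=
        Real.exp_le_exp.2 ((le_abs_self _).trans (hψ'M x))
      have t4 : -|φ x - ψ' x| ≤ φ x - ψ' x := neg_abs_le _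
      have t5 := abs_nonneg (φ x - ψ' x)
      have t6 := Real.exp_pos (ψ' x)
      simp only
      rw [t2]
      nlinarith
    have e3 := h ψ' hψ'c hψ's
    have e4 : ∫ x, |φ x - ψ' x| ∂μ ≤ ε := by linarith
    have e5 : Real.exp M * ∫ x, |φ x - ψ' x| ∂ν ≤ Real.exp M * ε :=
      mul_le_mul_of_nonneg_left (by linarith) (Real.exp_pos _).le
    linarith
  refine le_of_forall_pos_le_add fun η hη => ?_
  have hpos : 0 < 1 + Real.exp M := by positivity
  have := key (η / (1 + Real.exp M)) (by positivity)
  rwa [div_mul_cancel₀ _ hpos.ne'] at this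

/-- The hard half of the variational formula: it suffices to test the entropy against compactly
supported continuous functions. Indicators of null sets give absolute continuity; clipped versions
of `log (dμ/dν)` give integrands `G n ≥ 0` converging pointwise to `klFun (dμ/dν)`, and Fatou's
lemma concludes. -/
theorem klDiv_le_of_variational (μ ν : Measure ℝ)
    [IsProbabilityMeasure μ] [IsProbabilityMeasure ν] {C : ℝ}
    (h : ∀ φ : ℝ → ℝ, Continuous φ → HasCompactSupport φ →
      ∫ x, φ x ∂μ - ∫ x, Real.exp (φ x) ∂ν + 1 ≤ C) :
    InformationTheory.klDiv μ ν ≤ ENNReal.ofReal C := by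
  have hb : ∀ φ : ℝ → ℝ, Measurable φ → ∀ M : ℝ, (∀ x, |φ x| ≤ M) →
      ∫ x, φ x ∂μ - ∫ x, Real.exp (φ x) ∂ν + 1 ≤ C := fun φ hφ M hM =>
    variational_bounded_measurable μ ν h hφ hM
  have hac : μ ≪ ν := by
    refine Measure.AbsolutelyContinuous.mk fun s hs hνs => ?_
    -- testing with large multiples of the indicator of a `ν`-null set
    have hn : ∀ n : ℕ, (n : ℝ) * μ.real s ≤ C := fun n => by
      have := hb (s.indicator fun _ => (n : ℝ)) (measurable_const.indicator hs) n fun x => by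
        by_cases hx : x ∈ s <;> simp [hx]
      have e1 : ∫ x, s.indicator (fun _ => (n : ℝ)) x ∂μ = n * μ.real s := by
        rw [integral_indicator_const _ hs, smul_eq_mul, mul_comm]
      have e2 : ∫ x, Real.exp (s.indicator (fun _ => (n : ℝ)) x) ∂ν = 1 := by
        have : (fun x => Real.exp (s.indicator (fun _ => (n : ℝ)) x)) =ᵐ[ν] fun _ => 1 := by
          filter_upwards [measure_eq_zero_iff_ae_notMem.1 hνs] with x hx
          simp [hx]
        rw [integral_congr_ae this]; simp
      linarith
    by_contra hne
    have hpos : 0 < μ.real s := by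
      rw [measureReal_def]
      exact ENNReal.toReal_pos hne (measure_ne_top _ _)
    obtain ⟨n, hn'⟩ := exists_nat_gt (C / μ.real s)
    rw [div_lt_iff₀ hpos] at hn'
    linarith [hn n]
  rw [InformationTheory.klDiv_eq_lintegral_klFun_of_ac hac]
  set f : ℝ → ℝ := fun x => (μ.rnDeriv ν x).toReal with hf
  have hfm : Measurable f := by fun_prop
  have hf0 : ∀ x, 0 ≤ f x := fun x => ENNReal.toReal_nonneg
  have hfi : Integrable f ν := Measure.integrable_toReal_rnDeriv
  set φ : ℕ → ℝ → ℝ := fun n x =>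
    Real.log (max (Real.exp (-n)) (min (Real.exp n) (f x))) with hφ
  have hcl : ∀ (n : ℕ) (x : ℝ), 0 < max (Real.exp (-(n : ℝ))) (min (Real.exp n) (f x)) := fun n x =>
    lt_max_of_lt_left (Real.exp_pos _)
  have hφm : ∀ n, Measurable (φ n) := fun n => by fun_prop
  have hφM : ∀ n x, |φ n x| ≤ n := fun n x => by
    refine abs_le.2 ⟨?_, ?_⟩
    · rw [Real.le_log_iff_exp_le (hcl n x)]; exact le_max_left _ _
    · rw [Real.log_le_iff_le_exp (hcl n x)]
      refine max_le (Real.exp_le_exp.2 ?_) (min_le_left _ _)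
      linarith [Nat.cast_nonneg (α := ℝ) n]
  set G : ℕ → ℝ → ℝ := fun n x => f x * φ n x - Real.exp (φ n x) + 1 with hG
  have hGm : ∀ n, Measurable (G n) := fun n => by fun_prop
  have hG0 : ∀ n x, 0 ≤ G n x := fun n x => by
    have hE : Real.exp (φ n x) = max (Real.exp (-(n : ℝ))) (min (Real.exp n) (f x)) :=
      Real.exp_log (hcl n x)
    set y := max (Real.exp (-(n : ℝ))) (min (Real.exp n) (f x)) with hy
    have hy0 : 0 < y := hcl n x
    have h1 : Real.exp (-(n : ℝ)) ≤ 1 := by simp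
    have h2 : 1 ≤ Real.exp (n : ℝ) := by simp
    have hk : 0 ≤ y * Real.log y + 1 - y := InformationTheory.klFun_nonneg hy0.le
    -- clipping moves `f x` towards `1`, so `f x - y` and `log y` have the same sign
    have hs : 0 ≤ (f x - y) * Real.log y := by
      rcases le_total (f x) (Real.exp (-n)) with h3 | h3
      · have : y = Real.exp (-n) := by
          rw [hy, min_eq_right (by linarith), max_eq_left h3]
        rw [this, Real.log_exp]
        nlinarith [Nat.cast_nonneg (α := ℝ) n]
      · rcases le_total (Real.exp n) (f x) with h4 | h4
        · have : y = Real.exp n := by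
            rw [hy, min_eq_left h4, max_eq_right (by linarith)]
          rw [this, Real.log_exp]
          exact mul_nonneg (by linarith) (Nat.cast_nonneg n)
        · have : y = f x := by rw [hy, min_eq_right h4, max_eq_right h3]
          simp [this]
    have : G n x = (f x - y) * Real.log y + (y * Real.log y + 1 - y) := by
      simp only [hG]; rw [hE]; simp only [hφ]; ring
    rw [this]; linarith
  have hGi : ∀ n, ∫⁻ x, ENNReal.ofReal (G n x) ∂ν ≤ ENNReal.ofReal C := fun n => by
    have i1 : Integrable (fun x => f x * φ n x) ν :=
      hfi.mul_bdd (hφm n).aestronglyMeasurable (ae_of_all _ (hφM n))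
    have i2 : Integrable (fun x => Real.exp (φ n x)) ν := by
      refine Integrable.of_bound (by fun_prop) (Real.exp n) (ae_of_all _ fun x => ?_)
      rw [Real.norm_eq_abs, Real.abs_exp]
      exact Real.exp_le_exp.2 ((le_abs_self _).trans (hφM n x))
    have i3 : Integrable (G n) ν := (i1.sub i2).add (integrable_const 1)
    rw [← ofReal_integral_eq_lintegral_ofReal i3 (ae_of_all _ (hG0 n))]
    refine ENNReal.ofReal_le_ofReal ?_
    have e : ∫ x, G n x ∂ν = ∫ x, φ n x ∂μ - ∫ x, Real.exp (φ n x) ∂ν + 1 := by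
      have i4 : Integrable (fun x => f x * φ n x - Real.exp (φ n x)) ν := i1.sub i2
      simp only [hG]
      rw [integral_add i4 (integrable_const 1), integral_sub i1 i2]
      simp only [integral_const, probReal_univ, smul_eq_mul, mul_one]
      congr 2
      exact integral_rnDeriv_smul (f := φ n) hac
    rw [e]
    exact hb _ (hφm n) n (hφM n)
  have hlim : ∀ x, Tendsto (fun n => ENNReal.ofReal (G n x)) atTop
      (𝓝 (ENNReal.ofReal (InformationTheory.klFun (f x)))) := fun x => by
    refine ENNReal.tendsto_ofReal ?_
    have hexp0 : Tendsto (fun n : ℕ => Real.exp (-(n : ℝ))) atTop (𝓝 0) :=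
      Real.tendsto_exp_neg_atTop_nhds_zero.comp tendsto_natCast_atTop_atTop
    rcases (hf0 x).eq_or_lt with h0 | h0
    · have : ∀ n, G n x = 1 - Real.exp (-(n : ℝ)) := fun n => by
        simp only [hG, hφ]
        rw [Real.exp_log (hcl n x), ← h0, min_eq_right (Real.exp_pos _).le,
          max_eq_left (Real.exp_pos _).le]
        ring
      simp only [this, ← h0, InformationTheory.klFun_zero]
      simpa using hexp0.const_sub 1
    · refine Tendsto.congr' (f₁ := fun _ => InformationTheory.klFun (f x)) ?_ tendsto_const_nhds
      have hexpT : Tendsto (fun n : ℕ => Real.exp (n : ℝ)) atTop atTop :=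
        Real.tendsto_exp_atTop.comp tendsto_natCast_atTop_atTop
      filter_upwards [hexp0.eventually_le_const h0, hexpT.eventually_ge_atTop (f x)] with n h1 h2
      simp only [hG, hφ]
      rw [Real.exp_log (hcl n x), min_eq_right h2, max_eq_right h1, InformationTheory.klFun_apply]
      ring
  calc ∫⁻ x, ENNReal.ofReal (InformationTheory.klFun (f x)) ∂ν
      = ∫⁻ x, liminf (fun n => ENNReal.ofReal (G n x)) atTop ∂ν :=
        lintegral_congr fun x => (hlim x).liminf_eq.symm
    _ ≤ liminf (fun n => ∫⁻ x, ENNReal.ofReal (G n x) ∂ν) atTop :=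
        lintegral_liminf_le fun n => (hGm n).ennreal_ofReal
    _ ≤ ENNReal.ofReal C :=
        liminf_le_of_le (by isBoundedDefault) fun b hb' => by
          obtain ⟨n, hn⟩ := hb'.exists
          exact hn.trans (hGi n)


/-! ### Independence of the angular and radial parts of a Gaussian vector -/

theorem pi_gaussian_eq_withDensity (N : ℕ) :
    (Measure.pi fun _ : Fin N => gaussianReal 0 1) =
      (volume : Measure (Fin N → ℝ)).withDensity
        fun x => ENNReal.ofReal (∏ i, gaussianPDFReal 0 1 (x i)) := by
  refine Measure.pi_eq fun s hs => ?_
  have hp0 : ∀ y, 0 ≤ gaussianPDFReal 0 1 y := fun y => gaussianPDFReal_nonneg _ _ _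
  rw [withDensity_apply _ (MeasurableSet.univ_pi hs),
    ← lintegral_indicator (MeasurableSet.univ_pi hs)]
  have hind : ∀ x : Fin N → ℝ, (Set.univ.pi s).indicator
      (fun x => ENNReal.ofReal (∏ i, gaussianPDFReal 0 1 (x i))) x =
      ENNReal.ofReal (∏ i, (s i).indicator (gaussianPDFReal 0 1) (x i)) := fun x => by
    by_cases hx : x ∈ Set.univ.pi s
    · rw [Set.indicator_of_mem hx]
      congr 1
      exact Finset.prod_congr rfl fun i _ => (Set.indicator_of_mem (hx i (mem_univ i)) _).symm
    · rw [Set.indicator_of_notMem hx]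
      obtain ⟨i, hi⟩ : ∃ i, x i ∉ s i := by simpa [Set.mem_pi] using hx
      rw [Finset.prod_eq_zero (Finset.mem_univ i) (Set.indicator_of_notMem hi _), ENNReal.ofReal_zero]
  simp only [hind]
  have hi : ∀ i, Integrable ((s i).indicator (gaussianPDFReal 0 1)) volume := fun i =>
    (integrable_gaussianPDFReal 0 1).indicator (hs i)
  rw [← ofReal_integral_eq_lintegral_ofReal (μ := (volume : Measure (Fin N → ℝ)))
    (Integrable.fintype_prod hi)
    (ae_of_all _ fun x => Finset.prod_nonneg fun i _ => Set.indicator_nonneg (fun y _ => hp0 y) _),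
    integral_fintype_prod_volume_eq_prod,
    ENNReal.ofReal_prod_of_nonneg fun i _ => integral_nonneg
      (Set.indicator_nonneg fun y _ => hp0 y)]
  refine Finset.prod_congr rfl fun i _ => ?_
  rw [integral_indicator (hs i), gaussianReal_apply_eq_integral _ one_ne_zero]

/-- Polar coordinates: a function of the direction times a function of the norm integrates to a
product. -/
theorem lintegral_angular_mul_radial {E : Type*} [NormedAddCommGroup E] [NormedSpace ℝ E]
    [FiniteDimensional ℝ E] [Nontrivial E] [MeasurableSpace E] [BorelSpace E]
    (m : Measure E) [m.IsAddHaarMeasure] {F : E → ℝ≥0∞} (hF : Measurable F)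
    {g : ℝ → ℝ≥0∞} (hg : Measurable g) :
    ∫⁻ x, F (‖x‖⁻¹ • x) * g ‖x‖ ∂m =
      (∫⁻ u, F (u : E) ∂m.toSphere) *
        ∫⁻ r, g (r : ℝ) ∂(Measure.volumeIoiPow (Module.finrank ℝ E - 1)) := by
  rw [← lintegral_prod_mul (by fun_prop) (by fun_prop),
    ← m.measurePreserving_homeomorphUnitSphereProd.lintegral_comp_emb
      (Homeomorph.measurableEmbedding _)]
  simp only [homeomorphUnitSphereProd_apply_fst_coe, homeomorphUnitSphereProd_apply_snd_coe]
  rw [lintegral_subtype_comap (μ := m) (measurableSet_singleton (0 : E)).compl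
    (fun x => F (‖x‖⁻¹ • x) * g ‖x‖), restrict_compl_singleton]

/-- Radial projection of `ℝ^N` onto the sphere of radius `√N`, sending the origin
to itself. -/
def toSph (N : ℕ) (x : Fin N → ℝ) : Fin N → ℝ :=
  (Real.sqrt N / Real.sqrt (∑ i, x i ^ 2)) • x

theorem measurable_toSph (N : ℕ) : Measurable (toSph N) := by
  unfold toSph; fun_prop

/-- Factorization of Gaussian integrals into an angular and a radial part. The measures `τ` and `ρ`
are not normalized; only the product form matters. -/
theorem gaussian_angular_radial_aux (N : ℕ) (hN : 0 < N) :
    ∃ (τ : Measure (Fin N → ℝ)) (ρ : Measure ℝ), ∀ F : (Fin N → ℝ) → ℝ≥0∞, Measurable F →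
      ∀ g : ℝ → ℝ≥0∞, Measurable g →
      ∫⁻ x, F (toSph N x) * g (∑ i, x i ^ 2) ∂(Measure.pi fun _ : Fin N => gaussianReal 0 1) =
        (∫⁻ u, F u ∂τ) * ∫⁻ r, g r ∂ρ := by
  have : Nonempty (Fin N) := ⟨⟨0, hN⟩⟩
  set κ : ℝ := ((Real.sqrt (2 * Real.pi * (1 : ℝ≥0)))⁻¹) ^ N with hκ
  set d : ℝ → ℝ≥0∞ := fun r => ENNReal.ofReal (κ * Real.exp (-r ^ 2 / 2)) with hd
  have hdm : Measurable d := by fun_prop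
  have hdens : ∀ x : Fin N → ℝ, ENNReal.ofReal (∏ i, gaussianPDFReal 0 1 (x i)) =
      d (Real.sqrt (∑ i, x i ^ 2)) := fun x => by
    simp only [hd, gaussianPDFReal]
    rw [Real.sq_sqrt (Finset.sum_nonneg fun i _ => sq_nonneg _), Finset.prod_mul_distrib,
      ← Real.exp_sum, Finset.prod_const, Finset.card_univ, Fintype.card_fin,
      ← Finset.sum_neg_distrib, Finset.sum_div]
    simp [hκ]
  set R : Measure (Ioi (0 : ℝ)) :=
    Measure.volumeIoiPow (Module.finrank ℝ (EuclideanSpace ℝ (Fin N)) - 1)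
  set proj : Metric.sphere (0 : EuclideanSpace ℝ (Fin N)) 1 → (Fin N → ℝ) := fun u =>
    Real.sqrt N • (u : EuclideanSpace ℝ (Fin N)).ofLp
  have hproj : Measurable proj := by fun_prop
  refine ⟨(volume : Measure (EuclideanSpace ℝ (Fin N))).toSphere.map proj,
    (R.withDensity fun r => d r).map (fun r : Ioi (0 : ℝ) => (r : ℝ) ^ 2), fun F hF g hg => ?_⟩
  rw [lintegral_map hF hproj, lintegral_map hg (by fun_prop),
    lintegral_withDensity_eq_lintegral_mul _ (by fun_prop) (by fun_prop),
    pi_gaussian_eq_withDensity,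
    lintegral_withDensity_eq_lintegral_mul _ (by fun_prop)
      (by have := measurable_toSph N; fun_prop),
    ← (PiLp.volume_preserving_ofLp (Fin N)).lintegral_comp
      (by have := measurable_toSph N; fun_prop)]
  have key := lintegral_angular_mul_radial (volume : Measure (EuclideanSpace ℝ (Fin N)))
    (F := fun x => F (Real.sqrt N • x.ofLp)) (by fun_prop)
    (g := fun r => d r * g (r ^ 2)) (by fun_prop)
  simp only [Pi.mul_apply, proj, R] at key ⊢
  rw [← key]
  refine lintegral_congr fun x => ?_
  have hnorm : ‖x‖ = Real.sqrt (∑ i, x.ofLp i ^ 2) := by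
    rw [EuclideanSpace.norm_eq]; simp
  have hsq : ∑ i, x.ofLp i ^ 2 = ‖x‖ ^ 2 := by
    rw [hnorm, Real.sq_sqrt (Finset.sum_nonneg fun i _ => sq_nonneg _)]
  rw [hdens, toSph, ← hnorm, hsq]
  have : (Real.sqrt N / ‖x‖) • x.ofLp = Real.sqrt N • (‖x‖⁻¹ • x).ofLp := by
    rw [div_eq_mul_inv, mul_smul]; rfl
  rw [this]; ring

/-- Under the standard Gaussian on `ℝ^N`, the radial projection and the squared norm are
independent. -/
theorem gaussian_angular_radial_indep (N : ℕ) (hN : 0 < N) {F : (Fin N → ℝ) → ℝ≥0∞}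
    (hF : Measurable F) {g : ℝ → ℝ≥0∞} (hg : Measurable g) :
    ∫⁻ x, F (toSph N x) * g (∑ i, x i ^ 2) ∂(Measure.pi fun _ : Fin N => gaussianReal 0 1) =
      (∫⁻ x, F (toSph N x) ∂(Measure.pi fun _ : Fin N => gaussianReal 0 1)) *
        ∫⁻ x, g (∑ i, x i ^ 2) ∂(Measure.pi fun _ : Fin N => gaussianReal 0 1) := by
  obtain ⟨τ, ρ, h⟩ := gaussian_angular_radial_aux N hN
  have h1 := h F hF (fun _ => 1) measurable_const
  have h2 := h (fun _ => 1) measurable_const g hg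
  have h3 := h (fun _ => 1) measurable_const (fun _ => 1) measurable_const
  simp only [mul_one, one_mul, lintegral_one, measure_univ] at h1 h2 h3
  rw [h F hF g hg, h1, h2]
  calc _ = (∫⁻ u, F u ∂τ) * (∫⁻ r, g r ∂ρ) * 1 := by ring
    _ = _ := by rw [h3]; ring

/-! ### Exponential integrals over the sphere -/

/-- Weak law of large numbers for `∑ x_i²`, by Chebyshev's inequality. -/
theorem gaussian_shell (ε : ℝ) (hε : 0 < ε) :
    ∀ᶠ N : ℕ in atTop, (2 : ℝ≥0∞)⁻¹ ≤
      (Measure.pi fun _ : Fin N => gaussianReal 0 1) {x | |∑ i, x i ^ 2 - N| < ε * N} := by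
  set V : ℝ := Var[fun y => y ^ 2; gaussianReal 0 1] with hV
  have hL : MemLp (fun y : ℝ => y ^ 2) 2 (gaussianReal 0 1) := by
    have h4 : MemLp (id : ℝ → ℝ) 4 (gaussianReal 0 1) := memLp_id_gaussianReal 4
    have := h4.norm_rpow_div 2
    convert this using 1
    · ext y; simp
    · rw [ENNReal.eq_div_iff (by simp) (by simp)]; norm_num
  have h1 : ∫ y, y ^ 2 ∂(gaussianReal 0 1) = 1 := by
    have := variance_fun_id_gaussianReal (μ := 0) (v := 1)
    rw [variance_eq_integral (by fun_prop)] at this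
    simpa [integral_id_gaussianReal] using this
  obtain ⟨n₀, hn₀⟩ := exists_nat_gt (2 * V / ε ^ 2)
  filter_upwards [eventually_ge_atTop (max n₀ 1)] with N hN
  have hN1 : (1 : ℝ) ≤ N := by exact_mod_cast (le_max_right _ _).trans hN
  have hNn : (n₀ : ℝ) ≤ N := by exact_mod_cast (le_max_left _ _).trans hN
  set P := Measure.pi fun _ : Fin N => gaussianReal 0 1
  set S : (Fin N → ℝ) → ℝ := ∑ i, fun x => x i ^ 2 with hS
  have hSx : ∀ x, S x = ∑ i, x i ^ 2 := fun x => by simp [hS]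
  have hmp : ∀ i : Fin N, MemLp (fun x : Fin N → ℝ => x i ^ 2) 2 P := fun i =>
    hL.comp_measurePreserving (measurePreserving_eval _ i)
  have hSL : MemLp S 2 P := memLp_finsetSum' _ fun i _ => hmp i
  have hvar : Var[S; P] = N * V := by
    rw [hS, variance_sum_pi (X := fun _ y => y ^ 2) fun _ => hL]
    simp [hV]
  have hmean : ∫ x, S x ∂P = N := by
    simp only [hSx]
    rw [integral_finsetSum _ fun i _ => (hmp i).integrable (by norm_num)]
    have : ∀ i : Fin N, ∫ x, x i ^ 2 ∂P = 1 := fun i => by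
      rw [← h1]
      exact integral_comp_eval (μ := fun _ : Fin N => gaussianReal 0 1) (f := fun y => y ^ 2)
        (by fun_prop)
    simp [this]
  have hch := meas_ge_le_variance_div_sq hSL (c := ε * N) (by positivity)
  rw [hmean, hvar] at hch
  have hle : (N : ℝ) * V / (ε * N) ^ 2 ≤ 2⁻¹ := by
    have h2 : 2 * V < N * ε ^ 2 := by
      rw [div_lt_iff₀ (by positivity)] at hn₀
      nlinarith [sq_nonneg ε]
    rw [div_le_iff₀ (by positivity)]
    nlinarith
  have hcompl : {x : Fin N → ℝ | |∑ i, x i ^ 2 - N| < ε * N} = {x | ε * N ≤ |S x - N|}ᶜ := by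
    ext x; simp [hSx]
  have hmS : MeasurableSet {x : Fin N → ℝ | ε * N ≤ |S x - N|} := by
    simp only [hSx]
    exact measurableSet_le (by fun_prop) (by fun_prop)
  rw [hcompl, prob_compl_eq_one_sub hmS]
  have : P {x | ε * N ≤ |S x - N|} ≤ 2⁻¹ := by
    refine hch.trans ((ENNReal.ofReal_le_ofReal hle).trans ?_)
    rw [ENNReal.ofReal_inv_of_pos (by norm_num)]; simp
  calc (2 : ℝ≥0∞)⁻¹ = 1 - 2⁻¹ := by rw [ENNReal.one_sub_inv_two]
    _ ≤ _ := tsub_le_tsub_left this 1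

/-- A compactly supported continuous function changes uniformly little under dilations of its
argument by factors close to `1`, even at large arguments, where both values vanish. -/
theorem exists_dilation_modulus {φ : ℝ → ℝ} (hφ : Continuous φ) (hs : HasCompactSupport φ)
    {δ : ℝ} (hδ : 0 < δ) :
    ∃ ε > 0, ∀ s : ℝ, |s - 1| ≤ ε → ∀ v, |φ v - φ (s * v)| ≤ δ := by
  obtain ⟨η, hη, huc⟩ :=
    Metric.uniformContinuous_iff.1 (hs.uniformContinuous_of_continuous hφ) δ hδ
  obtain ⟨R, hR⟩ := hs.isCompact.isBounded.subset_closedBall (0 : ℝ)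
  have hz : ∀ v, R < |v| → φ v = 0 := fun v hv => by
    by_contra hne
    have := hR (subset_tsupport _ (Function.mem_support.2 hne))
    rw [mem_closedBall_zero_iff, Real.norm_eq_abs] at this
    linarith
  set R' := max R 1
  have hR' : 1 ≤ R' := le_max_right _ _
  have hRR : R ≤ R' := le_max_left _ _
  refine ⟨min (1 / 2) (η / (4 * R')), by positivity, fun s hs1 v => ?_⟩
  have hsh : |s - 1| ≤ 1 / 2 := hs1.trans (min_le_left _ _)
  have hsη : |s - 1| ≤ η / (4 * R') := hs1.trans (min_le_right _ _)
  rcases le_or_gt |v| (2 * R') with hv | hv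
  · have : dist v (s * v) < η := by
      rw [Real.dist_eq, show v - s * v = -((s - 1) * v) by ring, abs_neg, abs_mul]
      calc |s - 1| * |v| ≤ η / (4 * R') * (2 * R') := by gcongr
        _ = η / 2 := by field_simp; norm_num
        _ < η := by linarith
    have := huc this
    rw [Real.dist_eq] at this
    exact this.le
  · have h1 := abs_le.1 hsh
    have hsv : R < |s * v| := by
      rw [abs_mul, abs_of_nonneg (by linarith : 0 ≤ s)]
      nlinarith
    rw [hz v (by linarith), hz _ hsv]; simpa using hδ.le

theorem sigmaN_eq_map (N : ℕ) :
    sigmaN N = (Measure.pi fun _ : Fin N => gaussianReal 0 1).map (toSph N) := rfl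

instance isProbabilityMeasure_sigmaN (N : ℕ) : IsProbabilityMeasure (sigmaN N) := by
  rw [sigmaN_eq_map]
  exact Measure.isProbabilityMeasure_map (measurable_toSph N).aemeasurable

/-- On the shell `|Q - N| < εN`, the point is a dilation of its projection by a factor close to
`1`. -/
theorem abs_toSph_ratio_le {N : ℕ} (hN : 0 < N) {Q ε : ℝ} (hε : ε ≤ 1 / 2)
    (hQ : |Q - N| < ε * N) : 0 < Q ∧ |Real.sqrt Q / Real.sqrt N - 1| ≤ ε := by
  have hN0 : (0 : ℝ) < N := by exact_mod_cast hN
  have hQ0 : 0 < Q := by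
    have := (abs_lt.1 hQ).1
    nlinarith
  refine ⟨hQ0, ?_⟩
  set s := Real.sqrt Q / Real.sqrt N with hs
  have hs0 : 0 ≤ s := by positivity
  have hs2 : s ^ 2 - 1 = (Q - N) / N := by
    rw [hs, div_pow, Real.sq_sqrt hQ0.le, Real.sq_sqrt hN0.le]
    field_simp
  have h1 : |s - 1| * (s + 1) < ε := by
    rw [← abs_of_nonneg (by linarith : 0 ≤ s + 1), ← abs_mul,
      show (s - 1) * (s + 1) = s ^ 2 - 1 by ring, hs2, abs_div, abs_of_pos hN0,
      div_lt_iff₀ hN0]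
    exact hQ
  nlinarith [abs_nonneg (s - 1)]

/-- The uniform measure on the sphere is exponentially no larger than the Gaussian on
exponentials of sums. By independence, the sphere integral times the probability of the shell
`∑ x_i² ≈ N` is a Gaussian integral over the shell, where projecting costs at most a factor
`e^{Nδ}`; and the shell has probability at least `1/2`. -/
theorem eventually_integral_exp_sum_sigmaN_le {φ : ℝ → ℝ} (hφ : Continuous φ)
    (hs : HasCompactSupport φ) {δ : ℝ} (hδ : 0 < δ) :
    ∀ᶠ N : ℕ in atTop, ∫ v, Real.exp (∑ i, φ (v i)) ∂(sigmaN N) ≤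
      2 * (Real.exp (N * δ) * (∫ y, Real.exp (φ y) ∂(gaussianReal 0 1)) ^ N) := by
  obtain ⟨ε₀, hε₀, hmod⟩ := exists_dilation_modulus hφ hs hδ
  obtain ⟨M, hM⟩ := hφ.bounded_above_of_compact_support hs
  set ε := min ε₀ (1 / 2) with hεdef
  have hε : 0 < ε := by positivity
  filter_upwards [gaussian_shell ε hε, eventually_gt_atTop 0] with N hshell hN
  have hN0 : (0 : ℝ) < N := by exact_mod_cast hN
  set P := Measure.pi fun _ : Fin N => gaussianReal 0 1 with hP
  set F : (Fin N → ℝ) → ℝ≥0∞ := fun v => ENNReal.ofReal (Real.exp (∑ i, φ (v i))) with hF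
  have hφm : Measurable φ := hφ.measurable
  have hFm : Measurable F := by fun_prop
  set A : Set ℝ := {r | |r - N| < ε * N} with hA
  have hAm : MeasurableSet A := measurableSet_lt (by fun_prop) (by fun_prop)
  have hind := gaussian_angular_radial_indep N hN hFm
    (g := A.indicator 1) (measurable_one.indicator hAm)
  rw [← hP] at hind
  have hprobA : ∫⁻ x, A.indicator (1 : ℝ → ℝ≥0∞) (∑ i, x i ^ 2) ∂P =
      P {x | |∑ i, x i ^ 2 - N| < ε * N} := by
    rw [← lintegral_indicator_one (measurableSet_lt (by fun_prop) (by fun_prop))]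
    rfl
  rw [hprobA] at hind
  have hpt : ∀ x : Fin N → ℝ, F (toSph N x) * A.indicator 1 (∑ i, x i ^ 2) ≤
      ENNReal.ofReal (Real.exp (N * δ)) * F x := fun x => by
    by_cases hx : ∑ i, x i ^ 2 ∈ A
    · rw [Set.indicator_of_mem hx, Pi.one_apply, mul_one]
      obtain ⟨hQ, hr⟩ := abs_toSph_ratio_le hN (min_le_right _ _) hx
      simp only [hF]
      rw [← ENNReal.ofReal_mul (Real.exp_pos _).le, ← Real.exp_add]
      refine ENNReal.ofReal_le_ofReal (Real.exp_le_exp.2 ?_)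
      have hi : ∀ i, φ (toSph N x i) ≤ δ + φ (x i) := fun i => by
        have h1 := hmod _ (hr.trans (min_le_left _ _)) (toSph N x i)
        have h2 : Real.sqrt (∑ i, x i ^ 2) / Real.sqrt N * toSph N x i = x i := by
          have := Real.sqrt_pos.2 hQ
          have := Real.sqrt_pos.2 hN0
          simp only [toSph, Pi.smul_apply, smul_eq_mul]
          field_simp
        rw [h2] at h1
        linarith [(abs_le.1 h1).2]
      calc ∑ i, φ (toSph N x i) ≤ ∑ i, (δ + φ (x i)) := Finset.sum_le_sum fun i _ => hi i
        _ = N * δ + ∑ i, φ (x i) := by simp [Finset.sum_add_distrib]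
    · rw [Set.indicator_of_notMem hx, mul_zero]; exact zero_le
  have hZ : ∫⁻ v, F v ∂(sigmaN N) = ∫⁻ x, F (toSph N x) ∂P := by
    rw [sigmaN_eq_map, lintegral_map hFm (measurable_toSph N)]
  have hbd : ∀ v : Fin N → ℝ, ‖Real.exp (∑ i, φ (v i))‖ ≤ Real.exp (N * M) := fun v => by
    rw [Real.norm_eq_abs, Real.abs_exp]
    refine Real.exp_le_exp.2 ?_
    calc ∑ i, φ (v i) ≤ ∑ _i : Fin N, M :=
          Finset.sum_le_sum fun i _ => (le_abs_self _).trans (hM _)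
      _ = N * M := by simp
  have hint : ∀ (m : Measure (Fin N → ℝ)) [IsFiniteMeasure m],
      ∫⁻ v, F v ∂m = ENNReal.ofReal (∫ v, Real.exp (∑ i, φ (v i)) ∂m) := fun m _ =>
    (ofReal_integral_eq_lintegral_ofReal
      (Integrable.of_bound (Measurable.aestronglyMeasurable (by fun_prop)) _ (ae_of_all _ hbd))
      (ae_of_all _ fun _ => (Real.exp_pos _).le)).symm
  have hprod : ∫ x, Real.exp (∑ i, φ (x i)) ∂P =
      (∫ y, Real.exp (φ y) ∂(gaussianReal 0 1)) ^ N := by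
    simp only [Real.exp_sum]
    rw [hP, integral_fintype_prod_eq_pow (fun y => Real.exp (φ y)), Fintype.card_fin]
  have hI0 : 0 ≤ ∫ y, Real.exp (φ y) ∂(gaussianReal 0 1) :=
    integral_nonneg fun _ => (Real.exp_pos _).le
  have hmain : (∫⁻ v, F v ∂(sigmaN N)) * 2⁻¹ ≤ ENNReal.ofReal
      (Real.exp (N * δ) * (∫ y, Real.exp (φ y) ∂(gaussianReal 0 1)) ^ N) := by
    calc (∫⁻ v, F v ∂(sigmaN N)) * 2⁻¹
        ≤ ∫⁻ x, F (toSph N x) * A.indicator 1 (∑ i, x i ^ 2) ∂P := by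
          rw [hind, hZ]; gcongr
      _ ≤ ∫⁻ x, ENNReal.ofReal (Real.exp (N * δ)) * F x ∂P := lintegral_mono hpt
      _ = _ := by
          rw [lintegral_const_mul _ hFm, hint, hprod, ENNReal.ofReal_mul (Real.exp_pos _).le]
  have h2 : (2 : ℝ≥0∞)⁻¹ = ENNReal.ofReal (2⁻¹) := by
    rw [ENNReal.ofReal_inv_of_pos (by norm_num)]; simp
  rw [hint, h2, ← ENNReal.ofReal_mul (integral_nonneg fun _ => (Real.exp_pos _).le),
    ENNReal.ofReal_le_ofReal_iff (by positivity)] at hmain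
  linarith

/-! ### The entropy bound on the first marginal -/

theorem integral_marginal_one {N : ℕ} (hN : 0 < N) (m : Measure (Fin N → ℝ)) {φ : ℝ → ℝ}
    (hφ : Measurable φ) :
    ∫ x, φ (x 0) ∂(marginal N 1 m) = ∫ v, φ (v ⟨0, hN⟩) ∂m := by
  have hm : Measurable (projFun N 1) := by
    refine measurable_pi_lambda _ fun i => ?_
    unfold projFun
    split_ifs
    · exact measurable_pi_apply _
    · exact measurable_const
  rw [marginal, integral_map hm.aemeasurable (Measurable.aestronglyMeasurable (by fun_prop))]
  simp [projFun, hN]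

theorem integral_coord_eq_of_symm {N : ℕ} (m : Measure (Fin N → ℝ))
    (hsym : ∀ π : Equiv.Perm (Fin N), Measure.map (fun v i => v (π i)) m = m) {φ : ℝ → ℝ}
    (hφ : Measurable φ) (i j : Fin N) : ∫ v, φ (v i) ∂m = ∫ v, φ (v j) ∂m := by
  conv_lhs => rw [← hsym (Equiv.swap i j)]
  have hm : Measurable fun (v : Fin N → ℝ) k => v (Equiv.swap i j k) :=
    measurable_pi_lambda _ fun _ => measurable_pi_apply _
  rw [integral_map hm.aemeasurable (Measurable.aestronglyMeasurable (by fun_prop))]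
  simp

/-- The finite-`N` entropy bound on the first marginal: the Donsker–Varadhan inequality with test
function `∑ φ(v_i)`, whose mean is `N` times that of `φ` by exchangeability. -/
theorem marginal_one_le {N : ℕ} (hN : 0 < N) (m : Measure (Fin N → ℝ)) [IsProbabilityMeasure m]
    (hsym : ∀ π : Equiv.Perm (Fin N), Measure.map (fun v i => v (π i)) m = m)
    {φ : ℝ → ℝ} (hφ : Continuous φ) (hs : HasCompactSupport φ) {δ c : ℝ}
    (hexp : ∫ v, Real.exp (∑ i, φ (v i)) ∂(sigmaN N) ≤
      2 * (Real.exp (N * δ) * (∫ y, Real.exp (φ y) ∂(gaussianReal 0 1)) ^ N))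
    (hfin : InformationTheory.klDiv m (sigmaN N) ≠ ∞)
    (hc : (InformationTheory.klDiv m (sigmaN N)).toReal ≤ c * N) :
    ∫ x, φ (x 0) ∂(marginal N 1 m) ≤
      c + Real.log 2 / N + δ + Real.log (∫ y, Real.exp (φ y) ∂(gaussianReal 0 1)) := by
  have hN0 : (0 : ℝ) < N := by exact_mod_cast hN
  obtain ⟨M, hM⟩ := hφ.bounded_above_of_compact_support hs
  have hφm : Measurable φ := hφ.measurable
  have hexpi : ∀ {α : Type} [MeasurableSpace α] (ν : Measure α) [IsFiniteMeasure ν] (f : α → ℝ)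
      (K : ℝ), Measurable f → (∀ x, |f x| ≤ K) → Integrable (fun x => Real.exp (f x)) ν := by
    intro α _ ν _ f K hf hK
    refine Integrable.of_bound (by fun_prop) (Real.exp K) (ae_of_all _ fun x => ?_)
    rw [Real.norm_eq_abs, Real.abs_exp]
    exact Real.exp_le_exp.2 ((le_abs_self _).trans (hK x))
  have hsumM : ∀ v : Fin N → ℝ, |∑ i, φ (v i)| ≤ N * M := fun v => by
    calc |∑ i, φ (v i)| ≤ ∑ i, |φ (v i)| := Finset.abs_sum_le_sum_abs _ _
      _ ≤ ∑ _i : Fin N, M := Finset.sum_le_sum fun i _ => hM _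
      _ = N * M := by simp
  have hdv := integral_le_klDiv_add_log m (sigmaN N) hfin
    (g := fun v => ∑ i, φ (v i)) (by fun_prop) hsumM
  have hsum : ∫ v, ∑ i, φ (v i) ∂m = N * ∫ x, φ (x 0) ∂(marginal N 1 m) := by
    rw [integral_finsetSum _ fun i _ => Integrable.of_bound
      (Measurable.aestronglyMeasurable (by fun_prop)) M (ae_of_all _ fun v => hM (v i)), integral_marginal_one hN m hφm,
      Finset.sum_congr rfl fun i _ => integral_coord_eq_of_symm m hsym hφm i ⟨0, hN⟩]
    simp
  have hI : 0 < ∫ y, Real.exp (φ y) ∂(gaussianReal 0 1) :=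
    integral_exp_pos (hexpi _ φ M hφm hM)
  have hZ : 0 < ∫ v, Real.exp (∑ i, φ (v i)) ∂(sigmaN N) :=
    integral_exp_pos (hexpi _ (fun v : Fin N → ℝ => ∑ i, φ (v i)) _ (by fun_prop) hsumM)
  have hlog := Real.log_le_log hZ hexp
  rw [Real.log_mul two_ne_zero (by positivity), Real.log_mul (by positivity) (by positivity),
    Real.log_exp, Real.log_pow] at hlog
  rw [hsum] at hdv
  refine le_of_mul_le_mul_left ?_ hN0
  calc (N : ℝ) * ∫ x, φ (x 0) ∂(marginal N 1 m)
      ≤ c * N + (Real.log 2 + (N * δ +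
        N * Real.log (∫ y, Real.exp (φ y) ∂(gaussianReal 0 1)))) := by linarith
    _ = _ := by field_simp; ring

/-! ### Passage to the limit -/

/-- asymptotic lower semicontinuity of entropy along chaotic sequences. -/
theorem stmt5 (μ : Measure ℝ) (hμ : IsProbabilityMeasure μ)
    (μN : (N : ℕ) → Measure (Fin N → ℝ))
    (hprob : ∀ N, IsProbabilityMeasure (μN N))
    (hsupp : ∀ N, μN N {v | ∑ i, v i ^ 2 ≠ (N : ℝ)} = 0)
    (hsym : ∀ N (π : Equiv.Perm (Fin N)),
      Measure.map (fun v i => v (π i)) (μN N) = μN N)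
    (hmarg : ∀ k : ℕ, ∀ φ : BoundedContinuousFunction (Fin k → ℝ) ℝ,
      Tendsto (fun N => ∫ x, φ x ∂(marginal N k (μN N))) atTop
        (𝓝 (∫ x, φ x ∂(Measure.pi fun _ : Fin k => μ)))) :
    relEntropy μ (gaussianReal 0 1) ≤
      Filter.liminf (fun N : ℕ => relEntropy (μN N) (sigmaN N) / (N : ℝ≥0∞))
        Filter.atTop := by
  rw [relEntropy_eq_klDiv]
  simp only [relEntropy_eq_klDiv]
  by_contra hlt
  rw [not_le] at hlt
  obtain ⟨c, hc1, hc2⟩ := ENNReal.lt_iff_exists_nnreal_btwn.1 hlt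
  refine absurd (klDiv_le_of_variational μ (gaussianReal 0 1) (C := c) ?_)
    (by rw [ENNReal.ofReal_coe_nnreal]; exact hc2.not_ge)
  intro φ hφ hs
  obtain ⟨M, hM⟩ := hφ.bounded_above_of_compact_support hs
  set I := ∫ y, Real.exp (φ y) ∂(gaussianReal 0 1) with hI
  have hI0 : 0 < I := by
    refine integral_exp_pos (Integrable.of_bound (by fun_prop) (Real.exp M) (ae_of_all _ fun x => ?_))
    rw [Real.norm_eq_abs, Real.abs_exp]
    exact Real.exp_le_exp.2 ((le_abs_self _).trans (hM x))
  have hlim : Tendsto (fun N => ∫ x, φ (x 0) ∂(marginal N 1 (μN N))) atTop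
      (𝓝 (∫ y, φ y ∂μ)) := by
    have := hmarg 1 (BoundedContinuousFunction.ofNormedAddCommGroup
      (fun x : Fin 1 → ℝ => φ (x 0)) (by fun_prop) M fun x => hM _)
    rwa [show ∫ y, φ y ∂μ = ∫ x : Fin 1 → ℝ, φ (x 0) ∂(Measure.pi fun _ => μ) from
      (integral_comp_eval (μ := fun _ : Fin 1 => μ) (i := 0) hφ.aestronglyMeasurable).symm]
  have hlog2 : Tendsto (fun N : ℕ => Real.log 2 / N) atTop (𝓝 0) :=
    tendsto_const_div_atTop_nhds_zero_nat _
  have hkey : ∫ y, φ y ∂μ ≤ c + Real.log I := by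
    refine le_of_forall_pos_le_add fun η hη => ?_
    have hδ : 0 < η / 3 := by positivity
    have hev := (eventually_integral_exp_sum_sigmaN_le hφ hs hδ).and
      ((eventually_gt_atTop 0).and ((hlim.eventually_const_le
        (by linarith : ∫ y, φ y ∂μ - η / 3 < ∫ y, φ y ∂μ)).and (hlog2.eventually_le_const hδ)))
    obtain ⟨N, hN1, hexp, hN, hJ, hl⟩ :=
      ((frequently_lt_of_liminf_lt (by isBoundedDefault) hc1).and_eventually hev).exists
    have hNe : (N : ℝ≥0∞) ≠ 0 := by exact_mod_cast hN.ne'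
    rw [ENNReal.div_lt_iff (Or.inl hNe) (Or.inl (ENNReal.natCast_ne_top N))] at hN1
    have hle : (InformationTheory.klDiv (μN N) (sigmaN N)).toReal ≤ c * N := by
      have := ENNReal.toReal_mono (by finiteness) hN1.le
      simpa using this
    have := marginal_one_le hN (μN N) (hsym N) hφ hs hexp hN1.ne_top hle
    linarith
  -- the logarithmic bound implies the linear one required by the variational formula
  have := Real.log_le_sub_one_of_pos hI0
  linarith

end
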